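/- Let A and B be the 14×14 circulant matrices over 𝔽₂ with first rows (0,0,0,1,0,0,1,1,0,0,0,1,1,1) and (1,0,1,0,1,0,0,1,0,1,0,1,0,1), respectively, and let C₅₆ ⊆ 𝔽₂⁵⁶ be the row space of the 28×56 matrix (I₂₈ | M), where M is the 28×28 block matrix with blocks A, B in the first block row and Bᵀ, Aᵀ in the second block row. Then C₅₆ is a singly even self-dual [56,28,10] code whose shadow has minimum weight 12; in particular, C₅₆ is s-extremal. -/

import Mathlib

open Finset

/-- Hamming weight of a binary vector. -/
def wt {n : ℕ} (x : Fin n → ZMod 2) : ℕ := hammingNorm x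

/-- The dual of a set of binary vectors with respect to the standard inner product. -/
def dualSet {n : ℕ} (C : Set (Fin n → ZMod 2)) : Set (Fin n → ZMod 2) :=
  {x | ∀ y ∈ C, ∑ i, x i * y i = 0}

/-- A binary linear code is self-dual if it equals its dual code. -/
def IsSelfDual {n : ℕ} (C : Submodule (ZMod 2) (Fin n → ZMod 2)) : Prop :=
  (C : Set (Fin n → ZMod 2)) = dualSet (C : Set (Fin n → ZMod 2))

/-- A self-dual code is singly even if some codeword has weight not divisible by 4. -/
def IsSinglyEvenSelfDual {n : ℕ} (C : Submodule (ZMod 2) (Fin n → ZMod 2)) : Prop :=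
  IsSelfDual C ∧ ∃ x ∈ C, ¬ (4 ∣ wt x)

/-- The doubly even subcode `C₀` of `C` (as a set): codewords of weight ≡ 0 (mod 4). -/
def evenSub {n : ℕ} (C : Submodule (ZMod 2) (Fin n → ZMod 2)) : Set (Fin n → ZMod 2) :=
  {x | x ∈ C ∧ 4 ∣ wt x}

/-- The shadow `S = C₀^⊥ \ C` of a singly even self-dual code. -/
def shadow {n : ℕ} (C : Submodule (ZMod 2) (Fin n → ZMod 2)) : Set (Fin n → ZMod 2) :=
  dualSet (evenSub C) \ (C : Set (Fin n → ZMod 2))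

/-- The minimum (nonzero) weight of a set of vectors. -/
noncomputable def minWtSet {n : ℕ} (S : Set (Fin n → ZMod 2)) : ℕ :=
  sInf {w | ∃ x ∈ S, x ≠ 0 ∧ wt x = w}

/-- The minimum weight of a code. -/
noncomputable def minWt {n : ℕ} (C : Submodule (ZMod 2) (Fin n → ZMod 2)) : ℕ :=
  minWtSet (C : Set (Fin n → ZMod 2))

/-- A singly even self-dual code of length `n` is s-extremal if
`d(S) = n/2 + 4 - 2 d(C)`. -/
def IsSExtremal {n : ℕ} (C : Submodule (ZMod 2) (Fin n → ZMod 2)) : Prop :=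
  IsSinglyEvenSelfDual C ∧
    (minWtSet (shadow C) : ℤ) = ((n / 2 : ℕ) : ℤ) + 4 - 2 * (minWt C : ℤ)

/-- Two codes are equivalent if one is obtained from the other by permuting coordinates. -/
def CodeEquiv {n : ℕ} (C D : Submodule (ZMod 2) (Fin n → ZMod 2)) : Prop :=
  ∃ σ : Equiv.Perm (Fin n),
    Submodule.map (LinearMap.funLeft (ZMod 2) (ZMod 2) σ) C = D

/-- The neighbor `C₀ ∪ (t + C₀)` of `C` obtained from a shadow vector `t`:
the span of the doubly even subcode together with `t`. -/
def neighborCode {n : ℕ} (C : Submodule (ZMod 2) (Fin n → ZMod 2))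
    (t : Fin n → ZMod 2) : Submodule (ZMod 2) (Fin n → ZMod 2) :=
  Submodule.span (ZMod 2) (evenSub C ∪ {t})

/-- First row of the circulant matrix `A`. -/
def rowA : Fin 14 → ZMod 2 := ![0, 0, 0, 1, 0, 0, 1, 1, 0, 0, 0, 1, 1, 1]

/-- First row of the circulant matrix `B`. -/
def rowB : Fin 14 → ZMod 2 := ![1, 0, 1, 0, 1, 0, 0, 1, 0, 1, 0, 1, 0, 1]

/-- The 14×14 circulant matrix with first row `rowA`. -/
def matA : Matrix (Fin 14) (Fin 14) (ZMod 2) := fun i j => rowA (j - i)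

/-- The 14×14 circulant matrix with first row `rowB`. -/
def matB : Matrix (Fin 14) (Fin 14) (ZMod 2) := fun i j => rowB (j - i)

/-- The 28×28 block matrix with block rows `(A B)` and `(Bᵀ Aᵀ)`. -/
def M28 : Matrix (Fin 28) (Fin 28) (ZMod 2) := fun i j =>
  if hi : (i : ℕ) < 14 then
    if hj : (j : ℕ) < 14 then matA ⟨i, hi⟩ ⟨j, hj⟩
    else matB ⟨i, hi⟩ ⟨(j : ℕ) - 14, by have := j.isLt; omega⟩
  else
    if hj : (j : ℕ) < 14 then
      matB.transpose ⟨(i : ℕ) - 14, by have := i.isLt; omega⟩ ⟨j, hj⟩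
    else
      matA.transpose ⟨(i : ℕ) - 14, by have := i.isLt; omega⟩
        ⟨(j : ℕ) - 14, by have := j.isLt; omega⟩

/-- The 28×56 generator matrix `( I₂₈ | M28 )`. -/
def G56 : Matrix (Fin 28) (Fin 56) (ZMod 2) := fun i j =>
  if hj : (j : ℕ) < 28 then (if (i : ℕ) = (j : ℕ) then 1 else 0)
  else M28 i ⟨(j : ℕ) - 28, by have := j.isLt; omega⟩

/-- The code `C₅₆`: the row space of `( I₂₈ | M28 )`. -/
def C56 : Submodule (ZMod 2) (Fin 56 → ZMod 2) :=
  Submodule.span (ZMod 2) (Set.range fun i : Fin 28 => G56 i)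

/-!
`M28` is orthogonal, so `C56 = {(x, xM)}` is self-dual and the supports of `xM`, `yM` meet in as
many points, modulo `2`, as those of `x`, `y`; since the rows of `M28` have weight `13`, it follows
that `wt (xM) ≡ wt x [MOD 4]`. Hence `(0, 1)` is orthogonal to exactly the codewords of weight
divisible by `4`, and the shadow is the coset `(0, 1) + C56`, all of whose weights are divisible by
`4`. So a codeword of weight below `10`, or a shadow vector of weight below `12`, has a half of
weight at most `4`. As either half determines the other, it remains to inspect the sums of at most
four rows of `M28` or of its transpose.
-/

open Matrix

section Weight

variable {m n : ℕ}

theorem wt_eq_sum_val (x : Fin n → ZMod 2) : wt x = ∑ i, (x i).val := by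
  have val_eq (a : ZMod 2) : a.val = if a ≠ 0 then 1 else 0 := by decide +revert
  simp only [wt, hammingNorm, val_eq, card_filter]

theorem wt_eq_zero_iff {x : Fin n → ZMod 2} : wt x = 0 ↔ x = 0 :=
  hammingNorm_eq_zero

theorem wt_single_one (i : Fin n) : wt (Pi.single i (1 : ZMod 2)) = 1 := by
  simp [wt, hammingNorm, Pi.single_apply, filter_eq']

theorem wt_vecCons (a : ZMod 2) (x : Fin n → ZMod 2) : wt (vecCons a x) = a.val + wt x := by
  simp [wt_eq_sum_val, Fin.sum_univ_succ]

theorem wt_append (x : Fin m → ZMod 2) (y : Fin n → ZMod 2) :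
    wt (Fin.append x y) = wt x + wt y := by
  simp [wt_eq_sum_val, Fin.sum_univ_add]

theorem wt_add_add_two_mul_wt_mul (x y : Fin n → ZMod 2) :
    wt (x + y) + 2 * wt (x * y) = wt x + wt y := by
  have val_add (a b : ZMod 2) : (a + b).val + 2 * (a * b).val = a.val + b.val := by
    decide +revert
  simp only [wt_eq_sum_val, mul_sum, ← sum_add_distrib, Pi.add_apply, Pi.mul_apply, val_add]

theorem wt_one_add (x : Fin n → ZMod 2) : wt (1 + x) = n - wt x := by
  have val_one_add (a : ZMod 2) : (1 + a).val + a.val = 1 := by decide +revert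
  refine Nat.eq_sub_of_add_eq ?_
  simp only [wt_eq_sum_val, ← sum_add_distrib, Pi.add_apply, Pi.one_apply, val_one_add]
  simp

theorem wt_le_length (x : Fin n → ZMod 2) : wt x ≤ n := by
  simpa [wt] using hammingNorm_le_card_fintype (x := x)

theorem natCast_wt (x : Fin n → ZMod 2) : (wt x : ZMod 2) = 1 ⬝ᵥ x := by
  simp [wt_eq_sum_val, dotProduct]

theorem natCast_wt_mul (x y : Fin n → ZMod 2) : (wt (x * y) : ZMod 2) = x ⬝ᵥ y := by
  simp [wt_eq_sum_val, dotProduct]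

theorem mulVec_one_of_wt_odd {M : Matrix (Fin m) (Fin n) (ZMod 2)} (hrow : ∀ i, Odd (wt (M i))) :
    M *ᵥ 1 = 1 := by
  funext i
  rw [mulVec, dotProduct_comm, ← natCast_wt, Pi.one_apply]
  exact ZMod.natCast_eq_one_iff_odd.2 (hrow i)

theorem minWtSet_eq {S : Set (Fin n → ZMod 2)} {d : ℕ} {x : Fin n → ZMod 2} (hd : d ≠ 0)
    (hxS : x ∈ S) (hx : wt x = d) (hS : ∀ y ∈ S, y ≠ 0 → d ≤ wt y) : minWtSet S = d := by
  refine IsLeast.csInf_eq ⟨⟨x, hxS, fun hx0 => hd ?_, hx⟩, ?_⟩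
  · rw [← hx, wt_eq_zero_iff.2 hx0]
  · rintro _ ⟨y, hyS, hy, rfl⟩
    exact hS y hyS hy

end Weight

theorem add_eq_iff_eq_add_of_module_two {G : Type*} [AddCommGroup G] [Module (ZMod 2) G]
    {a b c : G} : a + b = c ↔ b = a + c := by
  rw [← eq_sub_iff_add_eq', ZModModule.sub_eq_add, add_comm]

section Shadow

variable {n : ℕ} {C : Submodule (ZMod 2) (Fin n → ZMod 2)}

theorem mem_dualSet {S : Set (Fin n → ZMod 2)} {x : Fin n → ZMod 2} :
    x ∈ dualSet S ↔ ∀ y ∈ S, x ⬝ᵥ y = 0 :=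
  Iff.rfl

theorem IsSelfDual.mem_iff (hC : IsSelfDual C) {x : Fin n → ZMod 2} :
    x ∈ C ↔ ∀ y ∈ C, x ⬝ᵥ y = 0 :=
  Set.ext_iff.1 hC x

theorem mem_shadow_iff_add_mem (hC : IsSinglyEvenSelfDual C) {t : Fin n → ZMod 2}
    (ht : ∀ c ∈ C, t ⬝ᵥ c = 0 ↔ 4 ∣ wt c) {s : Fin n → ZMod 2} :
    s ∈ shadow C ↔ s + t ∈ C := by
  obtain ⟨hdual, c₀, hc₀, hwt₀⟩ := hC
  constructor
  · -- Both `s` and `t` have inner product `0` with every word of `C₀` and `1` with the rest of `C`.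
    rintro ⟨hs, hsC⟩
    obtain ⟨c₁, hc₁, hsc₁⟩ : ∃ c ∈ C, s ⬝ᵥ c ≠ 0 := by
      by_contra! h
      exact hsC (hdual.mem_iff.2 h)
    have eq_of_ne_zero {a b : ZMod 2} : a ≠ 0 → b ≠ 0 → a + b = 0 := by decide +revert
    have htc₁ : t ⬝ᵥ c₁ ≠ 0 := fun h => hsc₁ (hs c₁ ⟨hc₁, (ht c₁ hc₁).1 h⟩)
    refine hdual.mem_iff.2 fun c hc => ?_
    rw [add_dotProduct]
    by_cases htc : t ⬝ᵥ c = 0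
    · rw [htc, add_zero]
      exact hs c ⟨hc, (ht c hc).1 htc⟩
    · have hcc₁ : s ⬝ᵥ (c + c₁) = 0 := by
        refine hs _ ⟨C.add_mem hc hc₁, (ht _ (C.add_mem hc hc₁)).1 ?_⟩
        rw [dotProduct_add, eq_of_ne_zero htc htc₁]
      rw [dotProduct_add, CharTwo.add_eq_zero] at hcc₁
      exact eq_of_ne_zero (hcc₁ ▸ hsc₁) htc
  · intro hst
    have dot_eq {c : Fin n → ZMod 2} (hc : c ∈ C) : s ⬝ᵥ c = t ⬝ᵥ c := by
      rw [← CharTwo.add_eq_zero, ← add_dotProduct]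
      exact hdual.mem_iff.1 hst c hc
    refine ⟨fun c hc => (dot_eq hc.1).trans ((ht c hc.1).2 hc.2), fun hs => hwt₀ ?_⟩
    exact (ht c₀ hc₀).1 ((dot_eq hc₀).symm.trans (hdual.mem_iff.1 hs c₀ hc₀))

end Shadow

section Append

variable {k m : ℕ}

theorem append_eq_append_iff {α : Type*} {x x' : Fin k → α} {y y' : Fin m → α} :
    Fin.append x y = Fin.append x' y' ↔ x = x' ∧ y = y' := by
  rw [← Prod.mk.injEq, ← (Fin.appendEquiv k m).injective.eq_iff]
  rfl

theorem append_zero_zero {α : Type*} [Zero α] :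
    Fin.append (0 : Fin k → α) (0 : Fin m → α) = 0 := by
  funext j
  refine Fin.addCases (fun j => ?_) (fun j => ?_) j <;> simp

theorem append_dotProduct_append {R : Type*} [NonUnitalNonAssocSemiring R] (x x' : Fin k → R)
    (y y' : Fin m → R) : Fin.append x y ⬝ᵥ Fin.append x' y' = x ⬝ᵥ x' + y ⬝ᵥ y' := by
  simp [dotProduct, Fin.sum_univ_add]

theorem sum_smul_append_single {R : Type*} [Semiring R] (M : Matrix (Fin k) (Fin m) R)
    (x : Fin k → R) :
    ∑ i, x i • Fin.append (Pi.single i 1) (M i) = Fin.append x (x ᵥ* M) := by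
  funext j
  refine Fin.addCases (fun j => ?_) (fun j => ?_) j
  · simp [Finset.sum_apply, Pi.single_apply]
  · simp [Finset.sum_apply, vecMul, dotProduct]

end Append

section SystematicCode

variable {k m : ℕ}

/-- The binary code with generator matrix `(I | M)`. -/
def systematicCode (M : Matrix (Fin k) (Fin m) (ZMod 2)) :
    Submodule (ZMod 2) (Fin (k + m) → ZMod 2) :=
  Submodule.span (ZMod 2) (Set.range fun i => Fin.append (Pi.single i 1) (M i))

theorem mem_systematicCode {M : Matrix (Fin k) (Fin m) (ZMod 2)} {c : Fin (k + m) → ZMod 2} :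
    c ∈ systematicCode M ↔ ∃ x, Fin.append x (x ᵥ* M) = c := by
  simp only [systematicCode, Submodule.mem_span_range_iff_exists_fun, sum_smul_append_single]

theorem append_mem_systematicCode {M : Matrix (Fin k) (Fin m) (ZMod 2)} {x : Fin k → ZMod 2}
    {y : Fin m → ZMod 2} : Fin.append x y ∈ systematicCode M ↔ y = x ᵥ* M := by
  rw [mem_systematicCode]
  constructor
  · rintro ⟨x', hx'⟩
    obtain ⟨rfl, rfl⟩ := append_eq_append_iff.1 hx'
    rfl
  · rintro rfl
    exact ⟨x, rfl⟩

theorem finrank_systematicCode (M : Matrix (Fin k) (Fin m) (ZMod 2)) :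
    Module.finrank (ZMod 2) (systematicCode M) = k := by
  rw [systematicCode, finrank_span_eq_card, Fintype.card_fin]
  refine Fintype.linearIndependent_iff.2 fun x hx => congrFun (?_ : x = 0)
  rw [sum_smul_append_single] at hx
  funext i
  simpa using congrFun hx (Fin.castAdd m i)

theorem append_mem_dualSet_systematicCode {M : Matrix (Fin k) (Fin m) (ZMod 2)}
    {x : Fin k → ZMod 2} {y : Fin m → ZMod 2} :
    Fin.append x y ∈ dualSet (systematicCode M : Set (Fin (k + m) → ZMod 2)) ↔ x = M *ᵥ y := by
  have dot_codeword (z : Fin k → ZMod 2) :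
      Fin.append x y ⬝ᵥ Fin.append z (z ᵥ* M) = (M *ᵥ y + x) ⬝ᵥ z := by
    rw [append_dotProduct_append, dotProduct_comm y, ← dotProduct_mulVec, dotProduct_comm z,
      add_dotProduct, add_comm]
  rw [← add_zero (M *ᵥ y), ← add_eq_iff_eq_add_of_module_two, ← dotProduct_eq_zero_iff]
  simp only [mem_dualSet, SetLike.mem_coe, mem_systematicCode, forall_exists_index,
    forall_apply_eq_imp_iff, dot_codeword]

end SystematicCode

section OrthogonalMatrix

variable {k : ℕ} {M : Matrix (Fin k) (Fin k) (ZMod 2)}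

theorem eq_vecMul_iff_eq_mulVec {ι R : Type*} [Fintype ι] [DecidableEq ι] [CommRing R]
    {N : Matrix ι ι R} (hN : N * Nᵀ = 1) {x y : ι → R} : y = x ᵥ* N ↔ x = N *ᵥ y := by
  rw [← mulVec_transpose]
  constructor
  · rintro rfl
    rw [mulVec_mulVec, hN, one_mulVec]
  · rintro rfl
    rw [mulVec_mulVec, mul_eq_one_comm.1 hN, one_mulVec]

theorem isSelfDual_systematicCode (hM : M * Mᵀ = 1) : IsSelfDual (systematicCode M) := by
  ext c
  obtain ⟨x, y, rfl⟩ : ∃ x y, c = Fin.append x y := ⟨_, _, Fin.append_castAdd_natAdd.symm⟩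
  exact append_mem_systematicCode.trans <|
    (eq_vecMul_iff_eq_mulVec hM).trans append_mem_dualSet_systematicCode.symm

theorem wt_vecMul_modEq_wt {m : ℕ} {N : Matrix (Fin k) (Fin m) (ZMod 2)} (hN : N * Nᵀ = 1)
    (hrow : ∀ i, wt (N i) ≡ 1 [MOD 4]) (x : Fin k → ZMod 2) : wt (x ᵥ* N) ≡ wt x [MOD 4] := by
  induction x using Pi.single_induction with
  | zero => rw [zero_vecMul, wt_eq_zero_iff.2 rfl, wt_eq_zero_iff.2 rfl]
  | single i a =>
    obtain rfl | rfl : a = 0 ∨ a = 1 := by decide +revert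
    · rw [Pi.single_zero, zero_vecMul, wt_eq_zero_iff.2 rfl, wt_eq_zero_iff.2 rfl]
    · rw [single_one_vecMul, wt_single_one]
      exact hrow i
  | add x y hx hy =>
    have hdot : (x ᵥ* N) ⬝ᵥ (y ᵥ* N) = x ⬝ᵥ y := by
      rw [← mulVec_transpose N y, dotProduct_mulVec, vecMul_vecMul, hN, vecMul_one]
    have hinter : wt (x ᵥ* N * y ᵥ* N) ≡ wt (x * y) [MOD 2] := by
      rw [← ZMod.natCast_eq_natCast_iff, natCast_wt_mul, natCast_wt_mul, hdot]
    have hsum := wt_add_add_two_mul_wt_mul x y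
    have hsum' := wt_add_add_two_mul_wt_mul (x ᵥ* N) (y ᵥ* N)
    rw [add_vecMul]
    unfold Nat.ModEq at *
    omega

theorem isSinglyEvenSelfDual_systematicCode [NeZero k] (hM : M * Mᵀ = 1)
    (hrow : ∀ i, wt (M i) ≡ 1 [MOD 4]) : IsSinglyEvenSelfDual (systematicCode M) := by
  refine ⟨isSelfDual_systematicCode hM, _, Submodule.subset_span ⟨0, rfl⟩, ?_⟩
  have := hrow 0
  rw [wt_append, wt_single_one]
  unfold Nat.ModEq at this
  omega

theorem append_zero_one_dotProduct_eq_zero_iff (hM : M * Mᵀ = 1)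
    (hrow : ∀ i, wt (M i) ≡ 1 [MOD 4]) {c : Fin (k + k) → ZMod 2} (hc : c ∈ systematicCode M) :
    Fin.append 0 1 ⬝ᵥ c = 0 ↔ 4 ∣ wt c := by
  obtain ⟨x, rfl⟩ := mem_systematicCode.1 hc
  have hmod := wt_vecMul_modEq_wt hM hrow x
  rw [append_dotProduct_append, zero_dotProduct, zero_add, ← natCast_wt,
    ZMod.natCast_eq_zero_iff, wt_append]
  unfold Nat.ModEq at hmod
  omega

theorem append_mem_shadow_systematicCode [NeZero k] (hM : M * Mᵀ = 1)
    (hrow : ∀ i, wt (M i) ≡ 1 [MOD 4]) {x y : Fin k → ZMod 2} :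
    Fin.append x y ∈ shadow (systematicCode M) ↔ y = 1 + x ᵥ* M := by
  have add_append : Fin.append x y + Fin.append 0 1 = Fin.append x (1 + y) := by
    funext j
    refine Fin.addCases (fun j => ?_) (fun j => ?_) j <;>
      simp [-Fin.natAdd_eq_addNat, add_comm]
  rw [mem_shadow_iff_add_mem (isSinglyEvenSelfDual_systematicCode hM hrow)
    fun c => append_zero_one_dotProduct_eq_zero_iff hM hrow, add_append,
    append_mem_systematicCode, add_eq_iff_eq_add_of_module_two]

theorem eq_one_add_vecMul_iff_eq_one_add_mulVec (hM : M * Mᵀ = 1)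
    (hrow : ∀ i, wt (M i) ≡ 1 [MOD 4]) {x y : Fin k → ZMod 2} :
    y = 1 + x ᵥ* M ↔ x = 1 + M *ᵥ y := by
  have odd_of_modEq (i : Fin k) : Odd (wt (M i)) :=
    Nat.odd_iff.2 ((hrow i).of_dvd (by decide : 2 ∣ 4))
  rw [← add_eq_iff_eq_add_of_module_two, eq_vecMul_iff_eq_mulVec hM, mulVec_add,
    mulVec_one_of_wt_odd odd_of_modEq]

theorem le_wt_of_mem_systematicCode (hM : M * Mᵀ = 1) {b d : ℕ} (hd : d ≤ 2 * b + 2)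
    (hrows : ∀ x, wt x ≤ b → x ≠ 0 → d ≤ wt x + wt (x ᵥ* M))
    (hcols : ∀ y, wt y ≤ b → y ≠ 0 → d ≤ wt y + wt (M *ᵥ y))
    {c : Fin (k + k) → ZMod 2} (hc : c ∈ systematicCode M) (hc0 : c ≠ 0) : d ≤ wt c := by
  obtain ⟨x, rfl⟩ := mem_systematicCode.1 hc
  have hx0 : x ≠ 0 := by
    rintro rfl
    exact hc0 (by rw [zero_vecMul, append_zero_zero])
  have hx : x = M *ᵥ (x ᵥ* M) := (eq_vecMul_iff_eq_mulVec hM).1 rfl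
  have hxM0 : x ᵥ* M ≠ 0 := fun h => hx0 (by rw [hx, h, mulVec_zero])
  rw [wt_append]
  by_contra! hlt
  obtain hlight | hlight : wt x ≤ b ∨ wt (x ᵥ* M) ≤ b := by omega
  · exact hlt.not_ge (hrows x hlight hx0)
  · have := hcols _ hlight hxM0
    rw [← hx] at this
    omega

theorem le_wt_of_mem_shadow_systematicCode [NeZero k] (hM : M * Mᵀ = 1)
    (hrow : ∀ i, wt (M i) ≡ 1 [MOD 4]) {b d : ℕ} (hdk : d ≡ k [MOD 4]) (hd : d < 2 * b + 6)
    (hrows : ∀ x, wt x ≤ b → d ≤ wt x + wt (1 + x ᵥ* M))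
    (hcols : ∀ y, wt y ≤ b → d ≤ wt y + wt (1 + M *ᵥ y))
    {s : Fin (k + k) → ZMod 2} (hs : s ∈ shadow (systematicCode M)) : d ≤ wt s := by
  obtain ⟨x, y, rfl⟩ : ∃ x y, s = Fin.append x y := ⟨_, _, Fin.append_castAdd_natAdd.symm⟩
  have hy : y = 1 + x ᵥ* M := (append_mem_shadow_systematicCode hM hrow).1 hs
  have hx : x = 1 + M *ᵥ y := (eq_one_add_vecMul_iff_eq_one_add_mulVec hM hrow).1 hy
  have hmod : wt x + wt y ≡ k [MOD 4] := by
    have hxM := wt_vecMul_modEq_wt hM hrow x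
    have hle := wt_le_length (x ᵥ* M)
    rw [hy, wt_one_add]
    unfold Nat.ModEq at *
    omega
  rw [wt_append]
  by_contra! hlt
  obtain hlight | hlight : wt x ≤ b ∨ wt y ≤ b := by
    unfold Nat.ModEq at *
    omega
  · have := hrows x hlight
    rw [← hy] at this
    omega
  · have := hcols y hlight
    rw [← hx] at this
    omega

end OrthogonalMatrix

section PackedSearch

variable {m n s : ℕ}

/-- A binary vector stored as the number whose base-`2 ^ s` digits are its coordinates. Addition of
vectors becomes bitwise exclusive or, and since `2 ^ s ≡ 1` modulo `2 ^ s - 1`, the weight is the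
remainder modulo `2 ^ s - 1`; both are single operations on numerals in the kernel. -/
def packBits (s : ℕ) (x : Fin n → ZMod 2) : ℕ :=
  Nat.ofDigits (2 ^ s) (List.ofFn fun i => (x i).val)

theorem packBits_zero : packBits s (0 : Fin n → ZMod 2) = 0 := by
  simp [packBits]

theorem packBits_mod_two_pow_sub_one (hn : n < 2 ^ s - 1) (x : Fin n → ZMod 2) :
    packBits s x % (2 ^ s - 1) = wt x := by
  have two_pow_modEq : 2 ^ s ≡ 1 [MOD 2 ^ s - 1] :=
    ((Nat.modEq_iff_dvd' Nat.one_le_two_pow).2 dvd_rfl).symm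
  have := Nat.ofDigits_modEq' _ _ _ two_pow_modEq (List.ofFn fun i => (x i).val)
  rw [Nat.ofDigits_one, List.sum_ofFn, ← wt_eq_sum_val] at this
  exact Eq.trans this (Nat.mod_eq_of_lt ((wt_le_length x).trans_lt hn))

theorem add_two_pow_mul_xor_add_two_pow_mul {a b : ℕ} (ha : a < 2 ^ s) (hb : b < 2 ^ s) (u v : ℕ) :
    (a + 2 ^ s * u) ^^^ (b + 2 ^ s * v) = (a ^^^ b) + 2 ^ s * (u ^^^ v) := by
  rw [← Nat.mod_add_div ((a + 2 ^ s * u) ^^^ (b + 2 ^ s * v)) (2 ^ s), Nat.xor_mod_two_pow,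
    Nat.xor_div_two_pow]
  simp [Nat.mod_eq_of_lt, Nat.add_mul_div_left, Nat.div_eq_of_lt, ha, hb]

theorem packBits_add (hs : 0 < s) (x y : Fin n → ZMod 2) :
    packBits s (x + y) = packBits s x ^^^ packBits s y := by
  have val_add (a b : ZMod 2) : (a + b).val = a.val ^^^ b.val := by decide +revert
  have val_lt (a : ZMod 2) : a.val < 2 ^ s := a.val_lt.trans_le (Nat.le_self_pow hs.ne' 2)
  induction n with
  | zero => simp [packBits]
  | succ n ih =>
    have := ih (vecTail x) (vecTail y)
    simp only [packBits, List.ofFn_succ, Nat.ofDigits_cons] at this ⊢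
    rw [add_two_pow_mul_xor_add_two_pow_mul (val_lt _) (val_lt _), ← val_add]
    exact congrArg (_ + 2 ^ s * ·) this

/-- Tests `p (k + l) (a ^^^ r₁ ^^^ ⋯ ^^^ rₗ)` for all choices of `l ≤ b` terms `r₁, …, rₗ` of a
list of packed vectors. -/
def checkLightSums (p : ℕ → ℕ → Bool) : List ℕ → ℕ → ℕ → ℕ → Bool
  | [], _, k, a => p k a
  | _ :: _, 0, k, a => p k a
  | r :: rs, b + 1, k, a =>
    checkLightSums p rs b (k + 1) (a ^^^ r) && checkLightSums p rs (b + 1) k a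

theorem test_add_vecMul_of_checkLightSums (hs : 0 < s) (p : ℕ → ℕ → Bool)
    (R : Matrix (Fin n) (Fin m) (ZMod 2)) (b k : ℕ) (v : Fin m → ZMod 2)
    (h : checkLightSums p (List.ofFn fun i => packBits s (R i)) b k (packBits s v))
    (x : Fin n → ZMod 2) (hx : wt x ≤ b) : p (k + wt x) (packBits s (v + x ᵥ* R)) := by
  induction n generalizing b k v with
  | zero =>
    obtain rfl : x = 0 := Subsingleton.elim _ _
    simpa [checkLightSums, wt_eq_zero_iff.2] using h
  | succ n ih =>
    rw [List.ofFn_succ] at h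
    obtain _ | b := b
    · obtain rfl := wt_eq_zero_iff.1 (Nat.le_zero.1 hx)
      simpa [checkLightSums, wt_eq_zero_iff.2] using h
    · rw [checkLightSums, Bool.and_eq_true, ← packBits_add hs] at h
      obtain ⟨a, x, rfl⟩ : ∃ a x', x = vecCons a x' := ⟨_, _, (cons_head_tail x).symm⟩
      rw [wt_vecCons] at hx ⊢
      have zero_or_one : ∀ a : ZMod 2, a = 0 ∨ a = 1 := by decide
      have val_one : (1 : ZMod 2).val = 1 := rfl
      have cons_vecMul_eq : vecCons a x ᵥ* R = a • R 0 + x ᵥ* vecTail R := cons_vecMul a x R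
      rw [cons_vecMul_eq]
      obtain rfl | rfl := zero_or_one a
      · simpa using ih (vecTail R) (b + 1) k v h.2 x (by simpa using hx)
      · have := ih (vecTail R) b (k + 1) (v + R 0) h.1 x (by omega)
        simpa [add_assoc, val_one] using this

theorem test_wt_vecMul_of_checkLightSums (hm : m < 2 ^ s - 1) (p : ℕ → ℕ → Bool)
    (R : Matrix (Fin n) (Fin m) (ZMod 2)) (b : ℕ)
    (h : checkLightSums (fun k a => p k (a % (2 ^ s - 1)))
      (List.ofFn fun i => packBits s (R i)) b 0 0)
    (x : Fin n → ZMod 2) (hx : wt x ≤ b) : p (wt x) (wt (x ᵥ* R)) := by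
  have hs : 0 < s := Nat.pos_of_ne_zero (by rintro rfl; simp at hm)
  have := test_add_vecMul_of_checkLightSums hs _ R b 0 0 (by rwa [packBits_zero]) x hx
  rwa [zero_add, zero_add, packBits_mod_two_pow_sub_one hm] at this

end PackedSearch

theorem C56_eq_systematicCode : C56 = systematicCode M28 := by
  have G56_row (i : Fin 28) : G56 i = Fin.append (Pi.single i 1) (M28 i) := by
    funext j
    refine Fin.addCases (m := 28) (n := 28) (fun j => ?_) (fun j => ?_) j
    · simp [G56, Pi.single_apply, Fin.ext_iff, eq_comm]
    · simp [-Fin.natAdd_eq_addNat, G56]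
  simp only [C56, G56_row]
  rfl

theorem M28_mul_transpose : M28 * M28ᵀ = 1 := by
  decide +kernel

theorem wt_M28_row_modEq (i : Fin 28) : wt (M28 i) ≡ 1 [MOD 4] := by
  have wt_row : ∀ i, wt (M28 i) = 13 := by decide +kernel
  rw [wt_row]
  rfl

/-- The test on `(wt x, wt (xM))` bounding below the weights of `(x, xM)` and `(x, 1 + xM)`. -/
def heavyPairTest (k w : ℕ) : Bool :=
  decide ((k ≠ 0 → 10 ≤ k + w) ∧ 12 ≤ k + (28 - w))

theorem bounds_of_heavyPairTest {x y : Fin 28 → ZMod 2} (h : heavyPairTest (wt x) (wt y)) :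
    (x ≠ 0 → 10 ≤ wt x + wt y) ∧ 12 ≤ wt x + wt (1 + y) := by
  rwa [heavyPairTest, decide_eq_true_iff, Ne, wt_eq_zero_iff, ← wt_one_add] at h

theorem bounds_vecMul_M28 {x : Fin 28 → ZMod 2} (hx : wt x ≤ 4) :
    (x ≠ 0 → 10 ≤ wt x + wt (x ᵥ* M28)) ∧ 12 ≤ wt x + wt (1 + x ᵥ* M28) :=
  bounds_of_heavyPairTest <| test_wt_vecMul_of_checkLightSums (s := 5) (by norm_num) heavyPairTest
    M28 4 (by decide +kernel) x hx

theorem bounds_M28_mulVec {y : Fin 28 → ZMod 2} (hy : wt y ≤ 4) :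
    (y ≠ 0 → 10 ≤ wt y + wt (M28 *ᵥ y)) ∧ 12 ≤ wt y + wt (1 + M28 *ᵥ y) := by
  rw [← vecMul_transpose]
  exact bounds_of_heavyPairTest <| test_wt_vecMul_of_checkLightSums (s := 5) (by norm_num)
    heavyPairTest M28ᵀ 4 (by decide +kernel) y hy

theorem minWt_systematicCode_M28 : minWt (systematicCode M28) = 10 := by
  let x : Fin 28 → ZMod 2 := Pi.single 0 1 + Pi.single 3 1 + Pi.single 16 1
  have wt_codeword : wt x + wt (x ᵥ* M28) = 10 := by decide +kernel
  exact minWtSet_eq (by norm_num) (append_mem_systematicCode.2 rfl)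
    ((wt_append _ _).trans wt_codeword) fun _ hc =>
      le_wt_of_mem_systematicCode M28_mul_transpose (b := 4) (by norm_num)
        (fun _ hx => (bounds_vecMul_M28 hx).1) (fun _ hy => (bounds_M28_mulVec hy).1) hc

theorem minWtSet_shadow_systematicCode_M28 : minWtSet (shadow (systematicCode M28)) = 12 := by
  let x : Fin 28 → ZMod 2 := Pi.single 0 1 + Pi.single 1 1
  have wt_vector : wt x + wt (1 + x ᵥ* M28) = 12 := by decide +kernel
  exact minWtSet_eq (by norm_num)
    ((append_mem_shadow_systematicCode M28_mul_transpose wt_M28_row_modEq).2 rfl)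
    ((wt_append _ _).trans wt_vector) fun _ hs _ =>
      le_wt_of_mem_shadow_systematicCode M28_mul_transpose wt_M28_row_modEq (b := 4) (d := 12) rfl
        (by norm_num) (fun _ hx => (bounds_vecMul_M28 hx).2)
        (fun _ hy => (bounds_M28_mulVec hy).2) hs

/-- `C₅₆` is a singly even self-dual `[56, 28, 10]` code whose shadow has minimum
weight 12; in particular, `C₅₆` is s-extremal. -/
theorem C56_sExtremal :
    IsSinglyEvenSelfDual C56 ∧
    Module.finrank (ZMod 2) C56 = 28 ∧
    minWt C56 = 10 ∧
    minWtSet (shadow C56) = 12 ∧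
    IsSExtremal C56 := by
  have hC : IsSinglyEvenSelfDual C56 :=
    C56_eq_systematicCode ▸ isSinglyEvenSelfDual_systematicCode M28_mul_transpose wt_M28_row_modEq
  have hfinrank : Module.finrank (ZMod 2) C56 = 28 :=
    C56_eq_systematicCode ▸ finrank_systematicCode M28
  have hmin : minWt C56 = 10 := C56_eq_systematicCode ▸ minWt_systematicCode_M28
  have hshadow : minWtSet (shadow C56) = 12 :=
    C56_eq_systematicCode ▸ minWtSet_shadow_systematicCode_M28
  refine ⟨hC, hfinrank, hmin, hshadow, hC, ?_⟩
  rw [hmin, hshadow]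
  norm_num
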